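/- (Titchmarsh theorem for distributions on a circle, continuous-function version.) Let n ≥ 2 and let f, g : 𝕋 → ℂ be continuous functions on 𝕋 = AddCircle (2π). Let a_I ≤ b_I and a_J ≤ b_J be real numbers with (b_I − a_I) + (b_J − a_J) < 2π/n, and set I = π_*([a_I, b_I]), J = π_*([a_J, b_J]). Assume supp f ⊆ R_n(I) and that there is no strictly smaller closed subinterval I' = π_*([a', b']) (with a_I ≤ a', b' ≤ b_I, and (a', b') ≠ (a_I, b_I)) with supp f ⊆ R_n(I'); assume the analogous conditions for g with J. Let a_K, b_K be reals with a_I + a_J ≤ a_K ≤ b_K ≤ b_I + b_J and supp (f ⋆ g) ⊆ R_n(π_*([a_K, b_K])), and set λ = a_K − a_I − a_J. If λ > 0, then there exist α, β ∈ ℂ with α^n = β^n = 1 and α ≠ β such that: (i) the function F_α = ∑_{k=0}^{n−1} α^k S_{2πk/n} f vanishes on π_*((b_I − 2π/n, a_I + λ)); (ii) G_α = ∑_{k=0}^{n−1} α^k S_{2πk/n} g vanishes on π_*((b_J − 2π/n, a_J)) and π_*(a_J) ∈ supp G_α; (iii) F_β = ∑_{k=0}^{n−1} β^k S_{2πk/n}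 f vanishes on π_*((b_I − 2π/n, a_I)) and π_*(a_I) ∈ supp F_β; (iv) G_β = ∑_{k=0}^{n−1} β^k S_{2πk/n} g vanishes on π_*((b_J − 2π/n, a_J + λ)). -/

import Mathlib

open MeasureTheory Real Set Pointwise

noncomputable section

abbrev 𝕋 : Type := AddCircle (2 * π)

instance : Fact (0 < 2 * π) := ⟨by positivity⟩

/-- Natural projection `ℝ → 𝕋`. -/
def proj : ℝ → 𝕋 := fun r => (r : 𝕋)

/-- Convolution of functions on the circle with respect to Haar (Lebesgue) measure. -/
def circConv (f g : 𝕋 → ℂ) : 𝕋 → ℂ := fun x => ∫ t : 𝕋, f t * g (x - t)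

/-- Shift operator `(S_y f)(x) = f (x - y)`. -/
def shift (y : 𝕋) (f : 𝕋 → ℂ) : 𝕋 → ℂ := fun x => f (x - y)

/-- `Rn n A = ⋃_{k=0}^{n-1} (π_*(2πk/n) + A)`. -/
def Rn (n : ℕ) (A : Set 𝕋) : Set 𝕋 :=
  ⋃ k ∈ Finset.range n, (proj (2 * π * k / n) +ᵥ A)

/-!
For an `n`-th root of unity `α`, the twisted sum `F_α` satisfies `F_α (x + 2π/n) = α F_α x`, and the
twisted sum of `f ⋆ g` is the integral of `F_α t * G_α (x - t)` over a single period `2π/n`. As the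
intervals `I` and `J` have total length less than `2π/n`, that integral is an ordinary convolution
on the line of the restrictions of `F_α` to `I` and of `G_α` to `J`. The Titchmarsh theorem on the
line then gives `F_α u * G_α v = 0` whenever `u + v < a_K`. Since `n f = ∑_α F_α`, minimality of
`I` and `J` provides `α` and `β` with `a_J ∈ supp G_α` and `a_I ∈ supp F_β`. Points `v` close to
`a_J` then show that `F_α` vanishes up to `a_K - a_J`, symmetrically for `G_β`, and `α ≠ β` because
`F_β` does not vanish near `a_I`.

On the line, the left end of the support of `u` is read off from the exponential decay of its
Laplace transform `L u` at `+∞` (Phragmén–Lindelöf, Liouville and Riemann–Lebesgue). If `f ⋆ g`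
vanishes below `c`, then so does `t ^ n (f ⋆ g)`, so `∑_{i + j = n} (n choose i) L(t^i f) L(t^j g)`
decays at rate `c` for all `n`. Multiplying by one of its terms `L(t^i f) L(t^j g)` bounds the decay
of the square of that term by the decay of the mixed products, which forces every product to decay
at any rate below `c`. Hence `f ⋆ t^k g` vanishes below `c` for every `k`: all moments of
`y ↦ f (x - y) g y` are zero when `x < c`.
-/

/-! ### Exponential decay rates -/

section DecayRate

open Asymptotics Filter Topology Finset

lemma tendsto_sqrt_add_cofinite : Tendsto (fun p : ℕ × ℕ ↦ √(p.1 + p.2)) cofinite atTop := by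
  refine tendsto_sqrt_atTop.comp (tendsto_atTop.2 fun b ↦ ?_)
  obtain ⟨N, hN⟩ := exists_nat_ge b
  refine (Set.finite_Iic (N, N)).subset fun p hp ↦ ?_
  have hlt : (p.1 + p.2 : ℝ) < N := (lt_of_not_ge (show ¬b ≤ p.1 + p.2 from hp)).trans_le hN
  norm_cast at hlt
  exact ⟨by dsimp only; lia, by dsimp only; lia⟩

lemma sqrt_add_sqrt_lt_two_mul_sqrt {x y z : ℝ} (hx : 0 ≤ x) (hy : 0 ≤ y) (hxy : x ≠ y)
    (h : x + y = 2 * z) : √x + √y < 2 * √z := by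
  have hne : √x - √y ≠ 0 := sub_ne_zero.2 fun h ↦ hxy ((sqrt_inj hx hy).1 h)
  have hz : 0 ≤ z := by linarith
  refine lt_of_pow_lt_pow_left₀ 2 (by positivity) ?_
  nlinarith [sq_sqrt hx, sq_sqrt hy, sq_sqrt hz, pow_pos (abs_pos.2 hne) 2, sq_abs (√x - √y)]

lemma le_of_forall_lt_exists_mem_antidiagonal {m : ℕ × ℕ → ℝ} {c : ℝ} (hm : BddBelow (range m))
    (h : ∀ p, m p < c → ∃ q ∈ antidiagonal (p.1 + p.2),
      q ≠ p ∧ m (q.1, p.2) + m (p.1, q.2) ≤ 2 * m p) (p : ℕ × ℕ) :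
    c ≤ m p := by
  by_contra! hp
  obtain ⟨ε, hε, hεp⟩ : ∃ ε > 0, √(p.1 + p.2) * ε < c - m p :=
    exists_pos_mul_lt (sub_pos.2 hp) _
  -- `m` need not attain its infimum. The penalty restores a minimiser `s`, and being strictly
  -- concave it makes the inequality that `h` provides at `s` strict.
  have htendsto : Tendsto (fun q ↦ m q + ε * √(q.1 + q.2)) cofinite atTop :=
    tendsto_atTop_add_left_of_le _ hm.some (fun q ↦ hm.some_mem ⟨q, rfl⟩)
      (tendsto_sqrt_add_cofinite.const_mul_atTop hε)
  obtain ⟨s, hs⟩ := htendsto.exists_forall_le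
  have hsc : m s < c := by
    have : 0 ≤ ε * √(s.1 + s.2) := by positivity
    linarith [hs p]
  obtain ⟨q, hq, hqs, hle⟩ := h s hsc
  rw [HasAntidiagonal.mem_antidiagonal] at hq
  have hne : q.1 ≠ s.1 := fun h1 ↦ hqs (Prod.ext h1 (by lia))
  have hsum : ((q.1 + s.2 : ℝ)) + (s.1 + q.2) = 2 * (s.1 + s.2) := by
    have : (q.1 + q.2 : ℝ) = s.1 + s.2 := mod_cast hq
    linarith
  have hconcave : √(q.1 + s.2) + √(s.1 + q.2) < 2 * √(s.1 + s.2) :=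
    sqrt_add_sqrt_lt_two_mul_sqrt (by positivity) (by positivity) (by norm_cast; lia) hsum
  have hmin_left := hs (q.1, s.2)
  have hmin_right := hs (s.1, q.2)
  dsimp only at hmin_left hmin_right
  linarith [mul_lt_mul_of_pos_left hconcave hε]

lemma isBigO_exp_neg_mul_of_le {a b : ℝ} (hab : a ≤ b) :
    (fun x ↦ exp (-b * x)) =O[atTop] fun x ↦ exp (-a * x) := by
  refine .of_bound 1 ?_
  filter_upwards [eventually_ge_atTop 0] with x hx
  simp only [norm_eq_abs, abs_exp, one_mul]
  gcongr

variable {𝕜 : Type*} [NormedField 𝕜] {φ ψ : ℝ → 𝕜} {a b c r : ℝ}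

lemma isBigO_mul_exp_neg_mul_add (hφ : φ =O[atTop] fun x ↦ exp (-a * x))
    (hψ : ψ =O[atTop] fun x ↦ exp (-b * x)) :
    (fun x ↦ φ x * ψ x) =O[atTop] fun x ↦ exp (-(a + b) * x) := by
  simpa only [← exp_add, ← add_mul, ← neg_add] using hφ.mul hψ

lemma isBigO_exp_neg_mul_of_sq (h : (fun x ↦ φ x ^ 2) =O[atTop] fun x ↦ exp (-(2 * a) * x)) :
    φ =O[atTop] fun x ↦ exp (-a * x) := by
  refine IsBigO.of_pow two_ne_zero (h.congr_right fun x ↦ ?_)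
  rw [Pi.pow_apply, ← exp_nat_mul]
  push_cast
  ring_nf

/-- The supremum of the exponents `a ≤ c` such that `φ x = O(exp (-a * x))` as `x → ∞`. The cap `c`
keeps the value real for functions that decay faster than every exponential. It is meaningful for
`φ` growing at most exponentially; otherwise the supremum of the empty set is `0`. -/
def cappedDecayRate (c : ℝ) (φ : ℝ → 𝕜) : ℝ :=
  sSup {a | a ≤ c ∧ φ =O[atTop] fun x ↦ exp (-a * x)}

lemma le_cappedDecayRate (hac : a ≤ c) (hφ : φ =O[atTop] fun x ↦ exp (-a * x)) :
    a ≤ cappedDecayRate c φ :=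
  le_csSup ⟨c, fun _ h ↦ h.1⟩ ⟨hac, hφ⟩

lemma isBigO_of_lt_cappedDecayRate (hφ : φ =O[atTop] fun x ↦ exp (-a * x))
    (hr : r < cappedDecayRate c φ) : φ =O[atTop] fun x ↦ exp (-r * x) := by
  have hne : {a | a ≤ c ∧ φ =O[atTop] fun x ↦ exp (-a * x)}.Nonempty :=
    ⟨min a c, min_le_right _ _, hφ.trans (isBigO_exp_neg_mul_of_le (min_le_left _ _))⟩
  obtain ⟨s, ⟨-, hs⟩, hrs⟩ := exists_lt_of_lt_csSup hne hr
  exact hs.trans (isBigO_exp_neg_mul_of_le hrs.le)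

lemma isBigO_mul_of_lt_cappedDecayRate_add (hφ : φ =O[atTop] fun x ↦ exp (-a * x))
    (hψ : ψ =O[atTop] fun x ↦ exp (-b * x))
    (hr : r < cappedDecayRate c φ + cappedDecayRate c ψ) :
    (fun x ↦ φ x * ψ x) =O[atTop] fun x ↦ exp (-r * x) := by
  obtain ⟨s, hs, hrs⟩ := exists_between (sub_lt_iff_lt_add.2 hr)
  have := isBigO_mul_exp_neg_mul_add (isBigO_of_lt_cappedDecayRate hφ hrs)
    (isBigO_of_lt_cappedDecayRate hψ (r := r - s) (by linarith))
  simpa only [add_sub_cancel] using this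

variable {F G : ℕ → ℝ → 𝕜} {w : ℕ × ℕ → 𝕜}

lemma weight_mul_sq_eq_sub_sum_erase_antidiagonal {R : Type*} [CommRing R] (w : ℕ × ℕ → R)
    (u v : ℕ → R) (p : ℕ × ℕ) :
    w p * (u p.1 * v p.2) ^ 2 =
      u p.1 * v p.2 * ∑ q ∈ antidiagonal (p.1 + p.2), w q * (u q.1 * v q.2) -
        ∑ q ∈ (antidiagonal (p.1 + p.2)).erase p,
          w q * (u q.1 * v p.2 * (u p.1 * v q.2)) := by
  have hp : p ∈ antidiagonal (p.1 + p.2) := HasAntidiagonal.mem_antidiagonal.2 rfl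
  rw [← add_sum_erase _ _ hp, mul_add, mul_sum, add_sub_assoc, ← sum_sub_distrib,
    Finset.sum_eq_zero fun q _ ↦ by ring]
  ring

lemma exists_mem_antidiagonal_cappedDecayRate_add_le (hF : ∀ i, F i =O[atTop] fun x ↦ exp (-a * x))
    (hG : ∀ i, G i =O[atTop] fun x ↦ exp (-b * x)) {p : ℕ × ℕ} (hw : w p ≠ 0)
    (hFG : (fun x ↦ ∑ q ∈ antidiagonal (p.1 + p.2), w q * (F q.1 x * G q.2 x))
      =O[atTop] fun x ↦ exp (-c * x))
    (hp : cappedDecayRate c (fun x ↦ F p.1 x * G p.2 x) < c) :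
    ∃ q ∈ antidiagonal (p.1 + p.2), q ≠ p ∧
      cappedDecayRate c (fun x ↦ F q.1 x * G p.2 x) +
        cappedDecayRate c (fun x ↦ F p.1 x * G q.2 x) ≤
      2 * cappedDecayRate c (fun x ↦ F p.1 x * G p.2 x) := by
  set m : ℕ → ℕ → ℝ := fun i j ↦ cappedDecayRate c fun x ↦ F i x * G j x
  change m p.1 p.2 < c at hp
  have hmul (i j : ℕ) : (fun x ↦ F i x * G j x) =O[atTop] fun x ↦ exp (-(a + b) * x) :=
    isBigO_mul_exp_neg_mul_add (hF i) (hG j)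
  by_contra! hlt
  -- Otherwise the square of `F p.1 * G p.2` decays at a rate `r` beyond twice the best one.
  obtain ⟨r, ⟨hrc, hrlt⟩, hr⟩ : ∃ r, (r < m p.1 p.2 + c ∧
      ∀ q ∈ (antidiagonal (p.1 + p.2)).erase p, r < m q.1 p.2 + m p.1 q.2) ∧ 2 * m p.1 p.2 < r := by
    refine (Eventually.and (Eventually.and ?_ ?_) self_mem_nhdsWithin).exists
      (f := 𝓝[>] (2 * m p.1 p.2))
    · exact nhdsWithin_le_nhds (eventually_lt_nhds (by linarith))
    · refine (eventually_all_finset _).2 fun q hq ↦ nhdsWithin_le_nhds (eventually_lt_nhds ?_)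
      exact hlt q (mem_of_mem_erase hq) (ne_of_mem_erase hq)
  have hsum : (fun x ↦ F p.1 x * G p.2 x *
      ∑ q ∈ antidiagonal (p.1 + p.2), w q * (F q.1 x * G q.2 x))
      =O[atTop] fun x ↦ exp (-r * x) := by
    have := isBigO_mul_exp_neg_mul_add
      (isBigO_of_lt_cappedDecayRate (hmul p.1 p.2) (sub_lt_iff_lt_add.2 hrc)) hFG
    simpa only [sub_add_cancel] using this
  have herase : (fun x ↦ ∑ q ∈ (antidiagonal (p.1 + p.2)).erase p,
      w q * (F q.1 x * G p.2 x * (F p.1 x * G q.2 x))) =O[atTop] fun x ↦ exp (-r * x) :=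
    IsBigO.fun_sum fun q hq ↦ (isBigO_mul_of_lt_cappedDecayRate_add (hmul _ _) (hmul _ _)
      (hrlt q hq)).const_mul_left _
  have hsq : (fun x ↦ (F p.1 x * G p.2 x) ^ 2) =O[atTop] fun x ↦ exp (-(2 * (r / 2)) * x) := by
    rw [mul_div_cancel₀ r two_ne_zero, ← isBigO_const_mul_left_iff hw]
    exact (hsum.sub herase).congr_left fun x ↦
      (weight_mul_sq_eq_sub_sum_erase_antidiagonal w (F · x) (G · x) p).symm
  have hle : r / 2 ≤ m p.1 p.2 :=
    le_cappedDecayRate (by linarith) (isBigO_exp_neg_mul_of_sq hsq)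
  linarith

theorem isBigO_mul_of_forall_sum_antidiagonal (hF : ∀ i, F i =O[atTop] fun x ↦ exp (-a * x))
    (hG : ∀ i, G i =O[atTop] fun x ↦ exp (-b * x)) (hw : ∀ p, w p ≠ 0)
    (hFG : ∀ n, (fun x ↦ ∑ p ∈ antidiagonal n, w p * (F p.1 x * G p.2 x))
      =O[atTop] fun x ↦ exp (-c * x)) (i j : ℕ) (hr : r < c) :
    (fun x ↦ F i x * G j x) =O[atTop] fun x ↦ exp (-r * x) := by
  have hmul (i j : ℕ) : (fun x ↦ F i x * G j x) =O[atTop] fun x ↦ exp (-(a + b) * x) :=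
    isBigO_mul_exp_neg_mul_add (hF i) (hG j)
  refine isBigO_of_lt_cappedDecayRate (c := c) (hmul i j) (hr.trans_le ?_)
  refine le_of_forall_lt_exists_mem_antidiagonal
    (m := fun p ↦ cappedDecayRate c fun x ↦ F p.1 x * G p.2 x) ⟨min (a + b) c, ?_⟩
    (fun p hp ↦ exists_mem_antidiagonal_cappedDecayRate_add_le hF hG (hw p) (hFG _) hp) (i, j)
  rintro _ ⟨p, rfl⟩
  exact le_cappedDecayRate (min_le_right _ _)
    ((hmul p.1 p.2).trans (isBigO_exp_neg_mul_of_le (min_le_left _ _)))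

end DecayRate

/-! ### The Titchmarsh theorem on the line -/

section Laplace

open Asymptotics Bornology FourierTransform Filter Topology
open ContinuousLinearMap (mul)
open Finset.HasAntidiagonal (antidiagonal mem_antidiagonal)
open scoped Convolution Nat

/-- The bilateral Laplace transform `∫ exp (-z t) u t dt`. For compactly supported `u` it is an
entire function of `z`; the integral has the junk value `0` where it does not converge. -/
def laplace (u : ℝ → ℂ) (z : ℂ) : ℂ := ∫ t : ℝ, Complex.exp (-z * t) * u t

variable {u v f g : ℝ → ℂ} {a c : ℝ} {z : ℂ}

lemma integrable_exp_neg_mul (hu : Integrable u) (hc : HasCompactSupport u) (z : ℂ) :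
    Integrable fun t : ℝ ↦ Complex.exp (-z * t) * u t := by
  rw [← integrableOn_iff_integrable_of_support_subset
    ((Function.support_mul_subset_right _ _).trans (subset_tsupport u))]
  exact hu.integrableOn.continuousOn_mul (by fun_prop) hc

lemma laplace_sub (hu : Integrable u) (hcu : HasCompactSupport u) (hv : Integrable v)
    (hcv : HasCompactSupport v) (z : ℂ) : laplace (u - v) z = laplace u z - laplace v z := by
  simp only [laplace, Pi.sub_apply, mul_sub]
  exact integral_sub (integrable_exp_neg_mul hu hcu z) (integrable_exp_neg_mul hv hcv z)

lemma hasSum_laplace (hu : Integrable u) (hc : HasCompactSupport u) (z : ℂ) :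
    HasSum (fun k : ℕ ↦ (∫ t : ℝ, (t : ℂ) ^ k * u t) * ((-z) ^ k / k !)) (laplace u z) := by
  obtain ⟨R, -, hR⟩ := hc.exists_pos_le_norm
  have hbound (k : ℕ) (t : ℝ) :
      ‖(-z * t) ^ k / k ! * u t‖ ≤ (‖z‖ * R) ^ k / k ! * ‖u t‖ := by
    rcases le_total R ‖t‖ with ht | ht
    · simp [hR t ht]
    · simp only [norm_mul, norm_div, norm_pow, norm_neg, Complex.norm_real, Complex.norm_natCast]
      gcongr
  have hexp (t : ℝ) :
      HasSum (fun k : ℕ ↦ (-z * t) ^ k / k ! * u t) (Complex.exp (-z * t) * u t) := by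
    have := (NormedSpace.expSeries_div_hasSum_exp (-z * t)).mul_right (u t)
    rwa [← Complex.exp_eq_exp_ℂ] at this
  have hterm (k : ℕ) : (∫ t : ℝ, (t : ℂ) ^ k * u t) * ((-z) ^ k / k !) =
      ∫ t : ℝ, (-z * t) ^ k / k ! * u t := by
    rw [← integral_mul_const]
    congr with t
    ring
  simp only [hterm]
  refine hasSum_integral_of_dominated_convergence
    (fun k t ↦ (‖z‖ * R) ^ k / k ! * ‖u t‖) (fun k ↦ ?_) (fun k ↦ .of_forall (hbound k))
    (.of_forall fun t ↦ ?_) ?_ (.of_forall hexp)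
  · exact (Continuous.aestronglyMeasurable (by fun_prop)).mul hu.aestronglyMeasurable
  · exact (summable_pow_div_factorial _).mul_right _
  · simpa only [tsum_mul_right] using hu.norm.const_mul _

lemma differentiable_laplace (hu : Integrable u) (hc : HasCompactSupport u) :
    Differentiable ℂ (laplace u) := by
  let p : FormalMultilinearSeries ℂ ℂ ℂ :=
    .ofScalars ℂ fun k ↦ (∫ t : ℝ, (t : ℂ) ^ k * u t) * ((-1) ^ k / k !)
  have hsum (z : ℂ) : HasSum (fun k ↦ p k fun _ ↦ z) (laplace u z) := by
    refine (hasSum_laplace hu hc z).congr_fun fun k ↦ ?_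
    rw [FormalMultilinearSeries.ofScalars_apply_eq, smul_eq_mul, neg_pow]
    ring
  have hradius : p.radius = ⊤ := by
    refine p.radius_eq_top_of_summable_norm fun r ↦ ?_
    simpa [mul_comm] using (hsum r).summable.norm
  have hp : HasFPowerSeriesOnBall (laplace u) p 0 ⊤ :=
    ⟨hradius.ge, by simp, fun _ ↦ by simpa only [zero_add] using hsum _⟩
  exact fun z ↦ (hp.differentiableOn z (by simp)).differentiableAt (by simp)

lemma norm_exp_mul_laplace_le (hu : Integrable u) {M : ℝ}
    (hM : ∀ t ∈ Function.support u, z.re * (a - t) ≤ M) :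
    ‖Complex.exp (z * a) * laplace u z‖ ≤ exp M * ∫ t, ‖u t‖ := by
  rw [laplace, ← integral_const_mul, ← integral_const_mul]
  refine norm_integral_le_of_norm_le (hu.norm.const_mul _) (.of_forall fun t ↦ ?_)
  by_cases ht : u t = 0
  · simp [ht]
  · rw [← mul_assoc, ← Complex.exp_add, norm_mul, Complex.norm_exp]
    gcongr
    have hre : (z * a + -z * t).re = z.re * (a - t) := by
      simp only [Complex.add_re, Complex.re_mul_ofReal, Complex.neg_re]
      ring
    exact hre.trans_le (hM t ht)

lemma isBigO_exp_mul_laplace_iff : (fun x : ℝ ↦ Complex.exp (x * a) * laplace u x) =O[atTop]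
    (fun _ ↦ (1 : ℝ)) ↔ (fun x : ℝ ↦ laplace u x) =O[atTop] fun x ↦ exp (-a * x) := by
  simp only [isBigO_iff]
  refine exists_congr fun C ↦ eventually_congr (.of_forall fun x ↦ ?_)
  rw [norm_mul, Complex.norm_exp, norm_one, norm_of_nonneg (exp_pos _).le, neg_mul, exp_neg,
    ← div_eq_mul_inv, le_div_iff₀ (exp_pos _), mul_comm]
  simp [mul_comm]

lemma isBigO_laplace (hu : Integrable u) (ha : Function.support u ⊆ Ici a) :
    (fun x : ℝ ↦ laplace u x) =O[atTop] fun x ↦ exp (-a * x) := by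
  refine isBigO_exp_mul_laplace_iff.1 (.of_bound (exp 0 * ∫ t, ‖u t‖) ?_)
  filter_upwards [eventually_ge_atTop 0] with x hx
  simpa using norm_exp_mul_laplace_le (z := x) (a := a) (M := 0) hu fun t ht ↦
    mul_nonpos_of_nonneg_of_nonpos (by simpa) (sub_nonpos.2 (ha ht))

lemma isBigO_laplace_pow_mul (hu : Continuous u) (hc : HasCompactSupport u)
    (ha : Function.support u ⊆ Ici a) (k : ℕ) :
    (fun x : ℝ ↦ laplace (fun t ↦ (t : ℂ) ^ k * u t) x) =O[atTop] fun x ↦ exp (-a * x) :=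
  isBigO_laplace (Continuous.integrable_of_hasCompactSupport (by fun_prop) hc.mul_left)
    ((Function.support_mul_subset_right _ _).trans ha)

lemma fourier_eq_laplace (u : ℝ → ℂ) (w : ℝ) : 𝓕 u w = laplace u (2 * π * Complex.I * w) := by
  rw [fourier_eq', laplace]
  congr with t
  simp only [RCLike.inner_apply, conj_trivial, smul_eq_mul]
  push_cast
  ring_nf

lemma eq_zero_of_fourier_eq_zero (hu : Integrable u) (h : 𝓕 u = 0) {t : ℝ}
    (ht : ContinuousAt u t) : u t = 0 := by
  rw [← hu.fourierInv_fourier_eq (by simp [h]) ht, h, fourierInv_eq]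
  simp

lemma norm_exp_mul_laplace_le_integral_norm (hv : Integrable v) (hc : HasCompactSupport v)
    (ha : Function.support v ⊆ Iic a)
    (hO : (fun x : ℝ ↦ laplace v x) =O[atTop] fun x ↦ exp (-a * x)) (z : ℂ) :
    ‖Complex.exp (z * a) * laplace v z‖ ≤ ∫ t, ‖v t‖ := by
  have hleft {z : ℂ} (hz : z.re ≤ 0) : ‖Complex.exp (z * a) * laplace v z‖ ≤ ∫ t, ‖v t‖ := by
    simpa using norm_exp_mul_laplace_le (z := z) (a := a) (M := 0) hv fun t ht ↦
      mul_nonpos_of_nonpos_of_nonneg hz (sub_nonneg.2 (ha ht))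
  rcases le_total z.re 0 with hz | hz
  · exact hleft hz
  have hd : Differentiable ℂ fun z ↦ Complex.exp (z * a) * laplace v z :=
    .mul (by fun_prop) (differentiable_laplace hv hc)
  obtain ⟨R, -, hR⟩ := hc.exists_pos_le_norm
  refine PhragmenLindelof.right_half_plane_of_bounded_on_real
    (f := fun z ↦ Complex.exp (z * a) * laplace v z) hd.diffContOnCl
    ⟨1, one_lt_two, |a| + R, .of_bound (∫ t, ‖v t‖) (.of_forall fun z ↦ ?_)⟩
    (isBigO_exp_mul_laplace_iff.2 hO).isBoundedUnder_le (fun x ↦ hleft (by simp)) hz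
  have hgrowth (t : ℝ) (ht : t ∈ Function.support v) : z.re * (a - t) ≤ (|a| + R) * ‖z‖ := by
    have htR : |t| < R := not_le.1 fun h ↦ ht (hR t h)
    calc z.re * (a - t) ≤ |z.re| * |a - t| := (le_abs_self _).trans (abs_mul _ _).le
      _ ≤ ‖z‖ * (|a| + R) := by
        gcongr
        · exact Complex.abs_re_le_norm z
        · exact (abs_sub a t).trans (by gcongr)
      _ = (|a| + R) * ‖z‖ := mul_comm _ _
  rw [rpow_one, norm_of_nonneg (exp_pos _).le, mul_comm (∫ t, ‖v t‖)]
  exact norm_exp_mul_laplace_le hv hgrowth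

lemma fourier_eq_zero_of_isBigO_laplace (hv : Integrable v) (hc : HasCompactSupport v)
    (ha : Function.support v ⊆ Iic a)
    (hO : (fun x : ℝ ↦ laplace v x) =O[atTop] fun x ↦ exp (-a * x)) : 𝓕 v = 0 := by
  have hd : Differentiable ℂ fun z ↦ Complex.exp (z * a) * laplace v z :=
    .mul (by fun_prop) (differentiable_laplace hv hc)
  have hbdd : IsBounded (range fun z ↦ Complex.exp (z * a) * laplace v z) :=
    isBounded_iff_forall_norm_le.2 ⟨_, forall_mem_range.2
      (norm_exp_mul_laplace_le_integral_norm hv hc ha hO)⟩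
  have hconst (w : ℝ) : ‖𝓕 v w‖ = ‖𝓕 v 0‖ := by
    simpa [fourier_eq_laplace, Complex.norm_exp] using
      congrArg norm (hd.apply_eq_apply_of_bounded hbdd (2 * π * Complex.I * w) 0)
  have hlim : Tendsto (fun _ : ℝ ↦ ‖𝓕 v 0‖) (cocompact ℝ) (𝓝 0) := by
    simpa only [hconst, norm_zero] using (zero_at_infty_fourier v).norm
  ext w
  rw [Pi.zero_apply, ← norm_eq_zero, hconst]
  exact tendsto_nhds_unique tendsto_const_nhds hlim

lemma eq_zero_of_isBigO_laplace (hu : Continuous u) (hc : HasCompactSupport u)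
    (hO : (fun x : ℝ ↦ laplace u x) =O[atTop] fun x ↦ exp (-a * x)) {t : ℝ} (ht : t < a) :
    u t = 0 := by
  have hint : Integrable u := hu.integrable_of_hasCompactSupport hc
  have hc' (s : Set ℝ) : HasCompactSupport (s.indicator u) := hc.mono (by simp)
  have hsub : (Iio a).indicator u = u - (Ici a).indicator u := by
    rw [← compl_Ici, indicator_compl]
  have hleft : (fun x : ℝ ↦ laplace ((Iio a).indicator u) x) =O[atTop] fun x ↦ exp (-a * x) := by
    have hright := isBigO_laplace (a := a) (hint.indicator measurableSet_Ici)
      support_indicator_subset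
    simpa only [hsub, laplace_sub hint hc (hint.indicator measurableSet_Ici) (hc' _)]
      using hO.sub hright
  have hloc : (Iio a).indicator u =ᶠ[𝓝 t] u :=
    (eqOn_indicator (s := Iio a)).eventuallyEq_of_mem (Iio_mem_nhds ht)
  rw [← hloc.eq_of_nhds]
  exact eq_zero_of_fourier_eq_zero (hint.indicator measurableSet_Iio)
    (fourier_eq_zero_of_isBigO_laplace (hint.indicator measurableSet_Iio) (hc' _)
      (support_indicator_subset.trans Iio_subset_Iic_self) hleft) (hu.continuousAt.congr hloc.symm)

lemma eq_zero_of_forall_integral_pow_mul_eq_zero (hu : Continuous u) (hc : HasCompactSupport u)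
    (h : ∀ k : ℕ, ∫ t : ℝ, (t : ℂ) ^ k * u t = 0) : u = 0 := by
  have hint : Integrable u := hu.integrable_of_hasCompactSupport hc
  have hlaplace (z : ℂ) : laplace u z = 0 := by
    simpa only [h, zero_mul, tsum_zero] using (hasSum_laplace hint hc z).tsum_eq.symm
  have hfourier : 𝓕 u = 0 := by
    ext w
    rw [fourier_eq_laplace, hlaplace, Pi.zero_apply]
  exact funext fun t ↦ eq_zero_of_fourier_eq_zero hint hfourier hu.continuousAt

lemma laplace_convolution (hf : Integrable fun t : ℝ ↦ Complex.exp (-z * t) * f t)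
    (hg : Integrable fun t : ℝ ↦ Complex.exp (-z * t) * g t) :
    laplace (f ⋆[mul ℂ ℂ] g) z = laplace f z * laplace g z := by
  rw [laplace, laplace, laplace, ← ContinuousLinearMap.mul_apply' ℂ ℂ,
    ← integral_convolution _ hf hg]
  congr with x
  rw [convolution_def, convolution_def, ← integral_const_mul]
  congr with t
  simp only [ContinuousLinearMap.mul_apply']
  have hexp : Complex.exp (-z * x) = Complex.exp (-z * t) * Complex.exp (-z * (x - t : ℝ)) := by
    rw [← Complex.exp_add]
    push_cast
    ring_nf
  rw [hexp]
  ring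

lemma pow_mul_convolution (hf : Continuous f) (hc : HasCompactSupport f) (hg : Continuous g)
    (n : ℕ) (x : ℝ) :
    (x : ℂ) ^ n * (f ⋆[mul ℂ ℂ] g) x = ∑ p ∈ antidiagonal n, n.choose p.1 *
      ((fun t : ℝ ↦ (t : ℂ) ^ p.1 * f t) ⋆[mul ℂ ℂ] fun t : ℝ ↦ (t : ℂ) ^ p.2 * g t) x := by
  simp only [convolution_def, ContinuousLinearMap.mul_apply', ← integral_const_mul]
  rw [← integral_finsetSum]
  · congr with t
    have hx : (x : ℂ) = t + (x - t : ℝ) := by push_cast; ring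
    rw [hx, (Commute.all _ _).add_pow', Finset.sum_mul]
    refine Finset.sum_congr rfl fun p _ ↦ ?_
    rw [nsmul_eq_mul]
    ring
  · intro p _
    exact Continuous.integrable_of_hasCompactSupport (by fun_prop) (hc.mul_left.mul_right.mul_left)

lemma laplace_pow_mul_convolution (hf : Continuous f) (hcf : HasCompactSupport f)
    (hg : Continuous g) (hcg : HasCompactSupport g) (n : ℕ) (z : ℂ) :
    laplace (fun x ↦ (x : ℂ) ^ n * (f ⋆[mul ℂ ℂ] g) x) z = ∑ p ∈ antidiagonal n,
      n.choose p.1 * (laplace (fun t ↦ (t : ℂ) ^ p.1 * f t) z *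
        laplace (fun t ↦ (t : ℂ) ^ p.2 * g t) z) := by
  have hexp {h : ℝ → ℂ} (hh : Continuous h) (hch : HasCompactSupport h) (k : ℕ) :
      Integrable fun t : ℝ ↦ Complex.exp (-z * t) * ((t : ℂ) ^ k * h t) :=
    Continuous.integrable_of_hasCompactSupport (by fun_prop) hch.mul_left.mul_left
  have hconv (p : ℕ × ℕ) := laplace_convolution (hexp hf hcf p.1) (hexp hg hcg p.2)
  simp only [← hconv]
  simp only [laplace, pow_mul_convolution hf hcf hg, Finset.mul_sum]
  rw [integral_finsetSum]
  · refine Finset.sum_congr rfl fun p _ ↦ ?_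
    rw [← integral_const_mul]
    congr with t
    ring
  · intro p _
    refine integrable_exp_neg_mul (Integrable.const_mul ?_ _) ?_ z
    · exact Integrable.integrable_convolution (mul ℂ ℂ)
        (Continuous.integrable_of_hasCompactSupport (by fun_prop) hcf.mul_left)
        (Continuous.integrable_of_hasCompactSupport (by fun_prop) hcg.mul_left)
    · exact (HasCompactSupport.convolution (mul ℂ ℂ) hcf.mul_left hcg.mul_left).mul_left

lemma convolution_pow_mul_eq_zero (hf : Continuous f) (hcf : HasCompactSupport f)
    (hg : Continuous g) (hcg : HasCompactSupport g) (hfg : ∀ x < c, (f ⋆[mul ℂ ℂ] g) x = 0)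
    (k : ℕ) {x : ℝ} (hx : x < c) : (f ⋆[mul ℂ ℂ] fun t ↦ (t : ℂ) ^ k * g t) x = 0 := by
  have hw (p : ℕ × ℕ) : ((p.1 + p.2).choose p.1 : ℂ) ≠ 0 :=
    mod_cast (Nat.choose_pos (Nat.le_add_right _ _)).ne'
  have hsum (n : ℕ) : (fun x : ℝ ↦ ∑ p ∈ antidiagonal n,
      (p.1 + p.2).choose p.1 * (laplace (fun t ↦ (t : ℂ) ^ p.1 * f t) x *
        laplace (fun t ↦ (t : ℂ) ^ p.2 * g t) x)) =O[atTop] fun x ↦ exp (-c * x) := by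
    refine (isBigO_laplace_pow_mul (hcg.continuous_convolution_right _ hf.locallyIntegrable hg)
      (hcf.convolution _ hcg) (fun y hy ↦ not_lt.1 fun h ↦ hy (hfg y h)) n).congr_left fun y ↦ ?_
    rw [laplace_pow_mul_convolution hf hcf hg hcg]
    refine Finset.sum_congr rfl fun p hp ↦ ?_
    rw [mem_antidiagonal.1 hp]
  obtain ⟨a, ha⟩ := hcf.isCompact.bddBelow
  obtain ⟨b, hb⟩ := hcg.isCompact.bddBelow
  obtain ⟨r, hxr, hrc⟩ := exists_between hx
  have hO := isBigO_mul_of_forall_sum_antidiagonal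
    (isBigO_laplace_pow_mul hf hcf fun t ht ↦ ha (subset_tsupport f ht))
    (isBigO_laplace_pow_mul hg hcg fun t ht ↦ hb (subset_tsupport g ht)) hw hsum 0 k hrc
  refine eq_zero_of_isBigO_laplace (u := f ⋆[mul ℂ ℂ] fun t ↦ (t : ℂ) ^ k * g t) ?_
    (hcf.convolution _ hcg.mul_left) (hO.congr_left fun y ↦ ?_) hxr
  · exact hcg.mul_left.continuous_convolution_right _ hf.locallyIntegrable (by fun_prop)
  · rw [laplace_convolution]
    · simp only [pow_zero, one_mul]
    · exact integrable_exp_neg_mul (hf.integrable_of_hasCompactSupport hcf) hcf _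
    · exact Continuous.integrable_of_hasCompactSupport (by fun_prop) hcg.mul_left.mul_left

theorem titchmarsh_line (hf : Continuous f) (hcf : HasCompactSupport f) (hg : Continuous g)
    (hcg : HasCompactSupport g) (hfg : ∀ x < c, (f ⋆[mul ℂ ℂ] g) x = 0) {s t : ℝ}
    (hst : s + t < c) : f s * g t = 0 := by
  have hmoments (k : ℕ) : ∫ y : ℝ, (y : ℂ) ^ k * (f (s + t - y) * g y) = 0 := by
    rw [← convolution_pow_mul_eq_zero hf hcf hg hcg hfg k hst, convolution_eq_swap]
    congr with y
    simp only [ContinuousLinearMap.mul_apply']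
    ring
  have hzero := eq_zero_of_forall_integral_pow_mul_eq_zero
    (u := fun y ↦ f (s + t - y) * g y) (by fun_prop) hcg.mul_left hmoments
  simpa using congrFun hzero t

end Laplace

/-! ### Twisted sums on the circle -/

section Circle

open Topology
open ContinuousLinearMap (mul)
open Finset (range)
open scoped Convolution

lemma proj_add (s t : ℝ) : proj (s + t) = proj s + proj t := rfl

lemma proj_sub (s t : ℝ) : proj (s - t) = proj s - proj t := rfl

lemma continuous_proj : Continuous proj := AddCircle.continuous_mk' _

lemma isOpenMap_proj : IsOpenMap proj := QuotientAddGroup.isOpenMap_coe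

/-- The rotation by `2π / n`, whose multiples are the translations occurring in `Rn n`. -/
def stepAngle (n : ℕ) : 𝕋 := proj (2 * π / n)

variable {n : ℕ} {f g φ ψ : 𝕋 → ℂ} {α ζ : ℂ} {A : Set 𝕋} {a b a' b' t : ℝ} {x : 𝕋}

lemma proj_two_pi_mul_div (n k : ℕ) : proj (2 * π * k / n) = k • stepAngle n := by
  rw [stepAngle, proj, proj, ← AddCircle.coe_nsmul, nsmul_eq_mul]
  ring_nf

lemma nsmul_stepAngle (hn : n ≠ 0) : n • stepAngle n = 0 := by
  rw [← proj_two_pi_mul_div, mul_div_cancel_right₀ _ (Nat.cast_ne_zero.2 hn)]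
  exact AddCircle.coe_period _

lemma mem_Rn : x ∈ Rn n A ↔ ∃ k < n, x - k • stepAngle n ∈ A := by
  simp only [Rn, proj_two_pi_mul_div, mem_iUnion, Finset.mem_range, exists_prop,
    mem_vadd_set_iff_neg_vadd_mem, vadd_eq_add, neg_add_eq_sub]

lemma add_stepAngle_mem_Rn (hx : x ∈ Rn n A) : x + stepAngle n ∈ Rn n A := by
  obtain ⟨k, hk, hkA⟩ := mem_Rn.1 hx
  obtain hlt | heq : k + 1 < n ∨ k + 1 = n := by lia
  · exact mem_Rn.2 ⟨k + 1, hlt, by rwa [succ_nsmul, add_sub_add_right_eq_sub]⟩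
  · refine mem_Rn.2 ⟨0, by lia, ?_⟩
    have hstep : stepAngle n = -(k • stepAngle n) := by
      rw [eq_neg_iff_add_eq_zero, ← succ_nsmul', heq, nsmul_stepAngle (by lia)]
    rwa [zero_nsmul, sub_zero, hstep, ← sub_eq_add_neg]

lemma mem_Rn_of_sub_nsmul_mem {k : ℕ} (hx : x - k • stepAngle n ∈ Rn n A) : x ∈ Rn n A := by
  induction k generalizing x with
  | zero => simpa using hx
  | succ k ih =>
    rw [succ_nsmul', ← sub_sub] at hx
    simpa using add_stepAngle_mem_Rn (ih hx)

lemma mem_Icc_of_proj_mem_Rn (ht : t ∈ Ioo (b - 2 * π / n) (a + 2 * π / n))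
    (h : proj t ∈ Rn n (proj '' Icc a b)) : t ∈ Icc a b := by
  obtain ⟨k, hk, s, hs, hst⟩ := mem_Rn.1 h
  have hn : (n : ℝ) ≠ 0 := by norm_cast; lia
  have hd : 0 < 2 * π / n := by positivity
  obtain ⟨m, hm⟩ : ∃ m : ℤ, m * (2 * π / n) = t - s := by
    rw [← proj_two_pi_mul_div, ← proj_sub] at hst
    obtain ⟨z, hz⟩ := (AddCircle.coe_eq_zero_iff _).1 (show proj (t - 2 * π * k / n - s) = 0 by
      rw [proj_sub, hst, sub_self])
    refine ⟨z * n + k, ?_⟩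
    rw [zsmul_eq_mul] at hz
    push_cast
    linear_combination (norm := (field_simp; ring)) hz
  have hm0 : m = 0 := by
    have hlt : (m : ℝ) < 1 := by
      nlinarith [ht.2, hs.1]
    have hgt : (-1 : ℝ) < m := by
      nlinarith [ht.1, hs.2]
    norm_cast at hlt
    have : -1 < m := mod_cast hgt
    lia
  have hts : t = s := by simpa [hm0, eq_comm, sub_eq_zero] using hm
  exact hts ▸ hs

lemma proj_notMem_Rn (ht : t ∈ Ioo (b - 2 * π / n) a) : proj t ∉ Rn n (proj '' Icc a b) := by
  have hd : 0 ≤ 2 * π / n := by positivity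
  intro h
  exact ht.2.not_ge (mem_Icc_of_proj_mem_Rn ⟨ht.1, by linarith [ht.2]⟩ h).1

/-- The twisted sum `∑_{k < n} α ^ k S_{2πk/n} f`, called `F_α` in the theorem. When `α ^ n = 1` it
is, up to the factor `n`, the component of `f` that is multiplied by `α` under rotation by
`2π / n`. -/
def twistedSum (n : ℕ) (α : ℂ) (f : 𝕋 → ℂ) (x : 𝕋) : ℂ :=
  ∑ k : Fin n, α ^ (k : ℕ) * shift (proj (2 * π * k / n)) f x

lemma twistedSum_eq_sum_range (n : ℕ) (α : ℂ) (f : 𝕋 → ℂ) (x : 𝕋) :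
    twistedSum n α f x = ∑ k ∈ range n, α ^ k * f (x - k • stepAngle n) := by
  simp only [twistedSum, shift, proj_two_pi_mul_div]
  exact Fin.sum_univ_eq_sum_range (fun k ↦ α ^ k * f (x - k • stepAngle n)) n

lemma continuous_twistedSum (hf : Continuous f) : Continuous (twistedSum n α f) := by
  unfold twistedSum shift
  fun_prop

lemma support_twistedSum_subset (hf : Function.support f ⊆ Rn n A) :
    Function.support (twistedSum n α f) ⊆ Rn n A := by
  intro x hx
  rw [Function.mem_support, twistedSum_eq_sum_range] at hx
  obtain ⟨k, -, hk⟩ := Finset.exists_ne_zero_of_sum_ne_zero hx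
  exact mem_Rn_of_sub_nsmul_mem (hf (right_ne_zero_of_mul hk))

lemma twistedSum_add_stepAngle (hα : α ^ n = 1) (x : 𝕋) :
    twistedSum n α f (x + stepAngle n) = α * twistedSum n α f x := by
  rcases eq_or_ne n 0 with rfl | hn
  · simp [twistedSum]
  let term (k : ℕ) : ℂ := α ^ k * f (x + stepAngle n - k • stepAngle n)
  have hwrap : term n = term 0 := by simp [term, hα, nsmul_stepAngle hn]
  have hmul : α * twistedSum n α f x = ∑ k ∈ range n, term (k + 1) := by
    rw [twistedSum_eq_sum_range, Finset.mul_sum]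
    refine Finset.sum_congr rfl fun k _ ↦ ?_
    rw [← mul_assoc, ← pow_succ', ← add_sub_add_right_eq_sub x _ (stepAngle n), ← succ_nsmul]
  rw [hmul, twistedSum_eq_sum_range]
  apply add_right_cancel (b := term n)
  rw [← Finset.sum_range_succ term, Finset.sum_range_succ' term, hwrap]

lemma twistedSum_add_nsmul (hα : α ^ n = 1) (k : ℕ) (x : 𝕋) :
    twistedSum n α f (x + k • stepAngle n) = α ^ k * twistedSum n α f x := by
  induction k with
  | zero => simp
  | succ k ih => rw [succ_nsmul, ← add_assoc, twistedSum_add_stepAngle hα, ih, pow_succ', mul_assoc]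

lemma add_nsmul_mem_tsupport_twistedSum (hα : α ^ n = 1) (k : ℕ) :
    x + k • stepAngle n ∈ tsupport (twistedSum n α f) ↔ x ∈ tsupport (twistedSum n α f) := by
  rcases eq_or_ne n 0 with rfl | hn
  · have hzero : twistedSum 0 α f = 0 := by ext; simp [twistedSum]
    simp [hzero]
  have hα0 : α ≠ 0 := (IsUnit.of_pow_eq_one hα hn).ne_zero
  have hsupp : Function.support (twistedSum n α f ∘ (· + k • stepAngle n)) =
      Function.support (twistedSum n α f) := by
    ext; simp [twistedSum_add_nsmul hα, hα0]
  have hpreimage := tsupport_comp_eq_preimage (twistedSum n α f)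
    (Homeomorph.addRight (k • stepAngle n))
  rw [tsupport, Homeomorph.coe_addRight, hsupp] at hpreimage
  exact (Set.ext_iff.1 hpreimage x).symm

lemma sum_twistedSum_pow (hζ : IsPrimitiveRoot ζ n) (f : 𝕋 → ℂ) (x : 𝕋) :
    ∑ j ∈ range n, twistedSum n (ζ ^ j) f x = n * f x := by
  rcases n.eq_zero_or_pos with rfl | hn
  · simp
  have hgeom {k : ℕ} (hk : k ∈ range n) (hk0 : k ≠ 0) : ∑ j ∈ range n, (ζ ^ j) ^ k = 0 := by
    have hne : ζ ^ k ≠ 1 := hζ.pow_ne_one_of_pos_of_lt hk0 (Finset.mem_range.1 hk)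
    simp only [pow_right_comm ζ _ k]
    rw [geom_sum_eq hne, pow_right_comm, hζ.pow_eq_one, one_pow, sub_self, zero_div]
  simp only [twistedSum_eq_sum_range]
  rw [Finset.sum_comm]
  simp only [← Finset.sum_mul]
  rw [Finset.sum_eq_single_of_mem 0 (Finset.mem_range.2 hn) fun k hk hk0 ↦ by
    rw [hgeom hk hk0, zero_mul]]
  simp

lemma tsupport_subset_iUnion_tsupport_twistedSum (hn : n ≠ 0) (hζ : IsPrimitiveRoot ζ n)
    (f : 𝕋 → ℂ) : tsupport f ⊆ ⋃ j ∈ range n, tsupport (twistedSum n (ζ ^ j) f) := by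
  refine closure_minimal (fun x hx ↦ ?_)
    ((range n).finite_toSet.isClosed_biUnion fun _ _ ↦ isClosed_tsupport _)
  have hsum : ∑ j ∈ range n, twistedSum n (ζ ^ j) f x ≠ 0 := by
    rw [sum_twistedSum_pow hζ]
    exact mul_ne_zero (Nat.cast_ne_zero.2 hn) hx
  obtain ⟨j, hj, hjx⟩ := Finset.exists_ne_zero_of_sum_ne_zero hsum
  exact mem_biUnion hj (subset_tsupport _ hjx)

lemma exists_proj_mem_tsupport_twistedSum (hn : n ≠ 0)
    (hsupp : tsupport f ⊆ Rn n (proj '' Icc a b))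
    (hmin : ∀ a' > a, ¬tsupport f ⊆ Rn n (proj '' Icc a' b)) :
    ∃ α : ℂ, α ^ n = 1 ∧ proj a ∈ tsupport (twistedSum n α f) := by
  by_contra! hcon
  have hζ := Complex.isPrimitiveRoot_exp n hn
  set ζ := Complex.exp (2 * π * Complex.I / n)
  have hroot (j : ℕ) : (ζ ^ j) ^ n = 1 := by rw [pow_right_comm, hζ.pow_eq_one, one_pow]
  have hev : ∀ᶠ s in 𝓝 a, ∀ j ∈ range n, proj s ∉ tsupport (twistedSum n (ζ ^ j) f) :=
    (Filter.eventually_all_finset _).2 fun j _ ↦ continuous_proj.continuousAt.eventually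
      ((isClosed_tsupport _).isOpen_compl.eventually_mem (hcon _ (hroot j)))
  obtain ⟨a', haa', ha'⟩ := mem_nhdsGE_iff_exists_Ico_subset.1 (nhdsWithin_le_nhds hev)
  refine hmin a' haa' fun x hx ↦ ?_
  obtain ⟨k, hk, s, hs, hsx⟩ := mem_Rn.1 (hsupp hx)
  refine mem_Rn.2 ⟨k, hk, s, ⟨?_, hs.2⟩, hsx⟩
  by_contra! hsa'
  obtain ⟨j, hj, hjx⟩ := mem_iUnion₂.1 (tsupport_subset_iUnion_tsupport_twistedSum hn hζ f hx)
  refine ha' ⟨hs.1, hsa'⟩ j hj ?_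
  rwa [← add_nsmul_mem_tsupport_twistedSum (hroot j) k, hsx, sub_add_cancel]

/-- The function on the line that agrees with `φ` on `[a, b]` and vanishes elsewhere. -/
def localLift (a b : ℝ) (φ : 𝕋 → ℂ) : ℝ → ℂ := (Icc a b).indicator (φ ∘ proj)

lemma hasCompactSupport_localLift (a b : ℝ) (φ : 𝕋 → ℂ) : HasCompactSupport (localLift a b φ) :=
  .of_support_subset_isCompact isCompact_Icc support_indicator_subset

lemma localLift_of_mem_Ioo (hφ : Function.support φ ⊆ Rn n (proj '' Icc a b))
    (ht : t ∈ Ioo (b - 2 * π / n) (a + 2 * π / n)) : localLift a b φ t = φ (proj t) := by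
  by_cases htab : t ∈ Icc a b
  · exact indicator_of_mem htab _
  · have hzero : φ (proj t) = 0 :=
      Function.notMem_support.1 fun h ↦ htab (mem_Icc_of_proj_mem_Rn ht (hφ h))
    rw [hzero, localLift, indicator_of_notMem htab]

lemma continuous_localLift (hcont : Continuous φ) (hab : b - a < 2 * π / n)
    (hφ : Function.support φ ⊆ Rn n (proj '' Icc a b)) : Continuous (localLift a b φ) := by
  refine continuous_iff_continuousAt.2 fun t ↦ ?_
  by_cases ht : t ∈ Icc a b
  · have hloc : localLift a b φ =ᶠ[𝓝 t] φ ∘ proj := by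
      have hlow : b - 2 * π / n < t := by linarith [ht.1]
      have hupp : t < a + 2 * π / n := by linarith [ht.2]
      filter_upwards [Ioo_mem_nhds hlow hupp] with s hs
      exact localLift_of_mem_Ioo hφ hs
    exact (hcont.comp continuous_proj).continuousAt.congr hloc.symm
  · have hloc : localLift a b φ =ᶠ[𝓝 t] 0 := by
      filter_upwards [isClosed_Icc.isOpen_compl.mem_nhds ht] with s hs
      exact indicator_of_notMem hs _
    exact continuousAt_const.congr hloc.symm

lemma integral_eq_intervalIntegral_sum (hn : n ≠ 0) (hφ : Continuous φ) (c : ℝ) :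
    ∫ x, φ x = ∫ t in c..c + 2 * π / n, ∑ k ∈ range n, φ (proj t + k • stepAngle n) := by
  have hcont (k : ℕ) : Continuous fun t ↦ φ (proj t + k • stepAngle n) :=
    hφ.comp (continuous_proj.add continuous_const)
  have hpiece (k : ℕ) : ∫ t in c..c + 2 * π / n, φ (proj t + k • stepAngle n) =
      ∫ t in c + k * (2 * π / n)..c + (k + 1 : ℕ) * (2 * π / n), φ (proj t) := by
    have hright : c + (k + 1 : ℕ) * (2 * π / n) = c + 2 * π / n + k * (2 * π / n) := by
      push_cast; ring
    rw [hright, ← intervalIntegral.integral_comp_add_right]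
    simp only [proj_add, ← proj_two_pi_mul_div, mul_div_right_comm _ (k : ℝ), mul_comm (k : ℝ)]
  rw [intervalIntegral.integral_finsetSum fun k _ ↦ (hcont k).intervalIntegrable _ _]
  simp only [hpiece]
  rw [intervalIntegral.sum_integral_adjacent_intervals (f := fun t ↦ φ (proj t))
    (a := fun k : ℕ ↦ c + k * (2 * π / n))
    fun k _ ↦ (hφ.comp continuous_proj).intervalIntegrable _ _,
    Nat.cast_zero, zero_mul, add_zero, mul_div_cancel₀ _ (Nat.cast_ne_zero.2 hn)]
  exact (AddCircle.intervalIntegral_preimage (2 * π) c φ).symm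

lemma circConv_comm (f g : 𝕋 → ℂ) : circConv f g = circConv g f := by
  ext x
  rw [circConv, circConv, ← integral_sub_left_eq_self _ volume x]
  congr with t
  rw [sub_sub_cancel, mul_comm]

lemma circConv_twistedSum_left (hf : Continuous f) (hg : Continuous g) (n : ℕ) (α : ℂ) :
    circConv (twistedSum n α f) g = twistedSum n α (circConv f g) := by
  ext x
  simp only [circConv, twistedSum_eq_sum_range, Finset.sum_mul]
  rw [integral_finsetSum]
  · refine Finset.sum_congr rfl fun k _ ↦ ?_
    rw [← integral_sub_right_eq_self (fun s ↦ f s * g (x - k • stepAngle n - s)) (k • stepAngle n),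
      ← integral_const_mul]
    congr with t
    rw [mul_assoc, sub_sub_sub_cancel_right]
  · intro k _
    exact Continuous.integrable_of_hasCompactSupport (by fun_prop) (.of_compactSpace _)

lemma twistedSum_circConv_proj (hn : n ≠ 0) (hα : α ^ n = 1) (hf : Continuous f)
    (hg : Continuous g) (c y : ℝ) :
    twistedSum n α (circConv f g) (proj y) =
      ∫ t in c..c + 2 * π / n, twistedSum n α f (proj t) * twistedSum n α g (proj (y - t)) := by
  have hF : Continuous (twistedSum n α f) := continuous_twistedSum hf
  rw [← circConv_twistedSum_left hf hg, circConv,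
    integral_eq_intervalIntegral_sum hn (by fun_prop) c]
  congr with t
  rw [twistedSum_eq_sum_range n α g, Finset.mul_sum]
  refine Finset.sum_congr rfl fun k _ ↦ ?_
  rw [twistedSum_add_nsmul hα, ← sub_sub, proj_sub]
  ring

lemma convolution_localLift (hφ : Function.support φ ⊆ Rn n (proj '' Icc a b))
    (hψ : Function.support ψ ⊆ Rn n (proj '' Icc a' b')) (hab : b - a < 2 * π / n) {y : ℝ}
    (hy : y ∈ Ioo (b + b' - 2 * π / n) (a + a' + 2 * π / n)) :
    (localLift a b φ ⋆[mul ℂ ℂ] localLift a' b' ψ) y =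
      ∫ t in (b - 2 * π / n)..b, φ (proj t) * ψ (proj (y - t)) := by
  have hd : 0 ≤ 2 * π / n := by positivity
  have hIcc : Icc a b ⊆ Ioc (b - 2 * π / n) b := Icc_subset_Ioc (by linarith) le_rfl
  rw [intervalIntegral.integral_of_le (by linarith), ← integral_indicator measurableSet_Ioc,
    convolution_def]
  congr with t
  rw [ContinuousLinearMap.mul_apply']
  by_cases htab : t ∈ Icc a b
  · rw [indicator_of_mem (hIcc htab), localLift, indicator_of_mem htab, Function.comp_apply,
      localLift_of_mem_Ioo hψ ⟨by linarith [hy.1, htab.2], by linarith [hy.2, htab.1]⟩]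
  rw [localLift, indicator_of_notMem htab, zero_mul, eq_comm]
  refine indicator_apply_eq_zero.2 fun ht ↦ ?_
  have hφt : φ (proj t) = 0 := Function.notMem_support.1 fun h ↦
    htab (mem_Icc_of_proj_mem_Rn ⟨ht.1, by linarith [ht.2]⟩ (hφ h))
  rw [hφt, zero_mul]

lemma convolution_localLift_of_lt {y : ℝ} (hy : y < a + a') :
    (localLift a b φ ⋆[mul ℂ ℂ] localLift a' b' ψ) y = 0 := by
  refine Function.notMem_support.1 fun h ↦ ?_
  obtain ⟨s, hs, t, ht, rfl⟩ := support_convolution_subset _ h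
  have hs' : s ∈ Icc a b := support_indicator_subset hs
  have ht' : t ∈ Icc a' b' := support_indicator_subset ht
  linarith [hs'.1, ht'.1]

lemma exists_ne_zero_of_proj_mem_tsupport {p q : ℝ} (ha : a ∈ Ioo p q)
    (h : proj a ∈ tsupport φ) : ∃ v ∈ Ioo p q, φ (proj v) ≠ 0 := by
  obtain ⟨_, ⟨v, hv, rfl⟩, hφv⟩ := mem_closure_iff_nhds.1 h _
    (isOpenMap_proj.image_mem_nhds (Ioo_mem_nhds ha.1 ha.2))
  exact ⟨v, hv, hφv⟩

lemma twistedSum_eq_zero_of_mem_Ioo (hf : tsupport f ⊆ Rn n (proj '' Icc a b)) (α : ℂ) :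
    ∀ x ∈ proj '' Ioo (b - 2 * π / n) a, twistedSum n α f x = 0 := by
  rintro _ ⟨t, ht, rfl⟩
  exact Function.notMem_support.1 fun h ↦
    proj_notMem_Rn ht (support_twistedSum_subset ((subset_tsupport f).trans hf) h)

section LeftEndpoints

variable {aI bI aJ bJ aK bK : ℝ}

lemma convolution_localLift_twistedSum_eq_zero (hn : n ≠ 0) (hα : α ^ n = 1) (hf : Continuous f)
    (hg : Continuous g) (hJ : aJ ≤ bJ) (hlen : (bI - aI) + (bJ - aJ) < 2 * π / n)
    (hsf : tsupport f ⊆ Rn n (proj '' Icc aI bI)) (hsg : tsupport g ⊆ Rn n (proj '' Icc aJ bJ))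
    (hKab : aK ≤ bK) (hbK : bK ≤ bI + bJ)
    (hsfg : tsupport (circConv f g) ⊆ Rn n (proj '' Icc aK bK)) {y : ℝ} (hy : y < aK) :
    (localLift aI bI (twistedSum n α f) ⋆[mul ℂ ℂ] localLift aJ bJ (twistedSum n α g)) y = 0 := by
  rcases le_or_gt y (bI + bJ - 2 * π / n) with hlow | hmid
  · exact convolution_localLift_of_lt (by linarith)
  have hF := support_twistedSum_subset (α := α) ((subset_tsupport f).trans hsf)
  have hG := support_twistedSum_subset (α := α) ((subset_tsupport g).trans hsg)
  have hconv := twistedSum_circConv_proj hn hα hf hg (bI - 2 * π / n) y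
  rw [sub_add_cancel] at hconv
  rw [convolution_localLift hF hG (by linarith) ⟨hmid, by linarith⟩, ← hconv]
  exact twistedSum_eq_zero_of_mem_Ioo hsfg α _ ⟨y, ⟨by linarith, hy⟩, rfl⟩

lemma twistedSum_mul_twistedSum_eq_zero (hn : n ≠ 0) (hα : α ^ n = 1) (hf : Continuous f)
    (hg : Continuous g) (hI : aI ≤ bI) (hJ : aJ ≤ bJ)
    (hlen : (bI - aI) + (bJ - aJ) < 2 * π / n)
    (hsf : tsupport f ⊆ Rn n (proj '' Icc aI bI)) (hsg : tsupport g ⊆ Rn n (proj '' Icc aJ bJ))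
    (hKab : aK ≤ bK) (hbK : bK ≤ bI + bJ)
    (hsfg : tsupport (circConv f g) ⊆ Rn n (proj '' Icc aK bK)) {u v : ℝ}
    (hu : u ∈ Ioo (bI - 2 * π / n) (aI + 2 * π / n))
    (hv : v ∈ Ioo (bJ - 2 * π / n) (aJ + 2 * π / n)) (huv : u + v < aK) :
    twistedSum n α f (proj u) * twistedSum n α g (proj v) = 0 := by
  have hF := support_twistedSum_subset (α := α) ((subset_tsupport f).trans hsf)
  have hG := support_twistedSum_subset (α := α) ((subset_tsupport g).trans hsg)
  rw [← localLift_of_mem_Ioo hF hu, ← localLift_of_mem_Ioo hG hv]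
  exact titchmarsh_line
    (continuous_localLift (continuous_twistedSum hf) (by linarith) hF)
    (hasCompactSupport_localLift _ _ _)
    (continuous_localLift (continuous_twistedSum hg) (by linarith) hG)
    (hasCompactSupport_localLift _ _ _)
    (fun y hy ↦ convolution_localLift_twistedSum_eq_zero hn hα hf hg hJ hlen hsf hsg hKab hbK
      hsfg hy) huv

lemma twistedSum_eq_zero_of_mem_tsupport (hn : n ≠ 0) (hα : α ^ n = 1) (hf : Continuous f)
    (hg : Continuous g) (hI : aI ≤ bI) (hJ : aJ ≤ bJ)
    (hlen : (bI - aI) + (bJ - aJ) < 2 * π / n)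
    (hsf : tsupport f ⊆ Rn n (proj '' Icc aI bI)) (hsg : tsupport g ⊆ Rn n (proj '' Icc aJ bJ))
    (hKab : aK ≤ bK) (hbK : bK ≤ bI + bJ)
    (hsfg : tsupport (circConv f g) ⊆ Rn n (proj '' Icc aK bK))
    (haJ : proj aJ ∈ tsupport (twistedSum n α g)) :
    ∀ x ∈ proj '' Ioo (bI - 2 * π / n) (aI + (aK - aI - aJ)), twistedSum n α f x = 0 := by
  rintro _ ⟨u, hu, rfl⟩
  have hwindow : aJ ∈ Ioo (bJ - 2 * π / n) (min (aK - u) (aJ + 2 * π / n)) :=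
    ⟨by linarith, lt_min (by linarith [hu.2]) (by linarith)⟩
  obtain ⟨v, hv, hGv⟩ := exists_ne_zero_of_proj_mem_tsupport hwindow haJ
  obtain ⟨hvu, hvJ⟩ := lt_min_iff.1 hv.2
  exact (mul_eq_zero.1 (twistedSum_mul_twistedSum_eq_zero hn hα hf hg hI hJ hlen hsf hsg hKab hbK
    hsfg ⟨hu.1, by linarith [hu.2]⟩ ⟨hv.1, hvJ⟩ (by linarith))).resolve_right hGv

theorem titchmarsh_circle_general (hn : n ≠ 0) (hf : Continuous f) (hg : Continuous g)
    (hI : aI ≤ bI) (hJ : aJ ≤ bJ) (hlen : (bI - aI) + (bJ - aJ) < 2 * π / n)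
    (hsf : tsupport f ⊆ Rn n (proj '' Icc aI bI))
    (hminf : ∀ a' > aI, ¬tsupport f ⊆ Rn n (proj '' Icc a' bI))
    (hsg : tsupport g ⊆ Rn n (proj '' Icc aJ bJ))
    (hming : ∀ a' > aJ, ¬tsupport g ⊆ Rn n (proj '' Icc a' bJ))
    (hKab : aK ≤ bK) (hbK : bK ≤ bI + bJ)
    (hsfg : tsupport (circConv f g) ⊆ Rn n (proj '' Icc aK bK)) (hlam : 0 < aK - aI - aJ) :
    ∃ α β : ℂ, α ^ n = 1 ∧ β ^ n = 1 ∧ α ≠ β ∧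
      (∀ x ∈ proj '' Ioo (bI - 2 * π / n) (aI + (aK - aI - aJ)), twistedSum n α f x = 0) ∧
      ((∀ x ∈ proj '' Ioo (bJ - 2 * π / n) aJ, twistedSum n α g x = 0) ∧
        proj aJ ∈ tsupport (twistedSum n α g)) ∧
      ((∀ x ∈ proj '' Ioo (bI - 2 * π / n) aI, twistedSum n β f x = 0) ∧
        proj aI ∈ tsupport (twistedSum n β f)) ∧
      (∀ x ∈ proj '' Ioo (bJ - 2 * π / n) (aJ + (aK - aI - aJ)), twistedSum n β g x = 0) := by
  obtain ⟨α, hα, haJ⟩ := exists_proj_mem_tsupport_twistedSum hn hsg hming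
  obtain ⟨β, hβ, haI⟩ := exists_proj_mem_tsupport_twistedSum hn hsf hminf
  have hFα := twistedSum_eq_zero_of_mem_tsupport hn hα hf hg hI hJ hlen hsf hsg hKab hbK hsfg haJ
  have hGβ := twistedSum_eq_zero_of_mem_tsupport hn hβ hg hf hJ hI (by rwa [add_comm]) hsg hsf hKab
    (by rwa [add_comm]) (by rwa [circConv_comm]) haI
  rw [sub_right_comm] at hGβ
  refine ⟨α, β, hα, hβ, ?_, hFα, ⟨twistedSum_eq_zero_of_mem_Ioo hsg α, haJ⟩,
    ⟨twistedSum_eq_zero_of_mem_Ioo hsf β, haI⟩, hGβ⟩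
  rintro rfl
  have haI_mem : aI ∈ Ioo (bI - 2 * π / n) (aI + (aK - aI - aJ)) := ⟨by linarith, by linarith⟩
  obtain ⟨v, hv, hFv⟩ := exists_ne_zero_of_proj_mem_tsupport haI_mem haI
  exact hFv (hFα _ (mem_image_of_mem proj hv))

end LeftEndpoints

end Circle

/-- Titchmarsh theorem for distributions on a circle (continuous-function version). -/
theorem titchmarsh_circle (n : ℕ) (hn : 2 ≤ n)
    (f g : 𝕋 → ℂ) (hf : Continuous f) (hg : Continuous g)
    (aI bI aJ bJ : ℝ) (hI : aI ≤ bI) (hJ : aJ ≤ bJ)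
    (hlen : (bI - aI) + (bJ - aJ) < 2 * π / n)
    (hsf : tsupport f ⊆ Rn n (proj '' Icc aI bI))
    (hminf : ∀ a' b' : ℝ, aI ≤ a' → b' ≤ bI → (a', b') ≠ (aI, bI) →
      ¬ tsupport f ⊆ Rn n (proj '' Icc a' b'))
    (hsg : tsupport g ⊆ Rn n (proj '' Icc aJ bJ))
    (hming : ∀ a' b' : ℝ, aJ ≤ a' → b' ≤ bJ → (a', b') ≠ (aJ, bJ) →
      ¬ tsupport g ⊆ Rn n (proj '' Icc a' b'))
    (aK bK : ℝ) (haK : aI + aJ ≤ aK) (hKab : aK ≤ bK) (hbK : bK ≤ bI + bJ)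
    (hsfg : tsupport (circConv f g) ⊆ Rn n (proj '' Icc aK bK))
    (hlam : 0 < aK - aI - aJ) :
    ∃ α β : ℂ, α ^ n = 1 ∧ β ^ n = 1 ∧ α ≠ β ∧
      (∀ x ∈ proj '' Ioo (bI - 2 * π / n) (aI + (aK - aI - aJ)),
        ∑ k : Fin n, α ^ (k : ℕ) * shift (proj (2 * π * k / n)) f x = 0) ∧
      ((∀ x ∈ proj '' Ioo (bJ - 2 * π / n) aJ,
        ∑ k : Fin n, α ^ (k : ℕ) * shift (proj (2 * π * k / n)) g x = 0) ∧
        proj aJ ∈ tsupport (fun x =>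
          ∑ k : Fin n, α ^ (k : ℕ) * shift (proj (2 * π * k / n)) g x)) ∧
      ((∀ x ∈ proj '' Ioo (bI - 2 * π / n) aI,
        ∑ k : Fin n, β ^ (k : ℕ) * shift (proj (2 * π * k / n)) f x = 0) ∧
        proj aI ∈ tsupport (fun x =>
          ∑ k : Fin n, β ^ (k : ℕ) * shift (proj (2 * π * k / n)) f x)) ∧
      (∀ x ∈ proj '' Ioo (bJ - 2 * π / n) (aJ + (aK - aI - aJ)),
        ∑ k : Fin n, β ^ (k : ℕ) * shift (proj (2 * π * k / n)) g x = 0) := by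
  exact titchmarsh_circle_general (by lia) hf hg hI hJ hlen hsf
    (fun a' ha' ↦ hminf a' bI ha'.le le_rfl (by simp [ha'.ne'])) hsg
    (fun a' ha' ↦ hming a' bJ ha'.le le_rfl (by simp [ha'.ne'])) hKab hbK hsfg hlam

end
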